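/- If m, n ≥ 3 and gcd(m, n) ≠ 1, then the digraph P(C⃗_m □ C⃗_n), obtained from the Cartesian product of directed cycles C⃗_m and C⃗_n by reversing all four directed edges incident to one vertex, is not hamiltonian. In particular, if C⃗_m □ C⃗_n is hamiltonian then P(C⃗_m □ C⃗_n) is not. -/

import Mathlib

/-- Edge relation of the Cartesian product `C⃗_m □ C⃗_n` on `ZMod m × ZMod n`. -/
def cpEdge (m n : ℕ) (u v : ZMod m × ZMod n) : Prop :=
  v = u + (1, 0) ∨ v = u + (0, 1)

/-- Edge relation of the digraph obtained by pushing at the vertex `v₀`: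
every edge incident with `v₀` is reversed. -/
def pushedEdge (m n : ℕ) (v₀ u v : ZMod m × ZMod n) : Prop :=
  (cpEdge m n u v ∧ u ≠ v₀ ∧ v ≠ v₀) ∨ (cpEdge m n v u ∧ (u = v₀ ∨ v = v₀))

/-- `E` has a hamiltonian cycle on the vertex set `S`, of length `N`. -/
def HamOn {V : Type} (E : V → V → Prop) (S : Set V) (N : ℕ) : Prop :=
  ∃ f : ZMod N → V, Function.Injective f ∧ Set.range f = S ∧ ∀ i, E (f i) (f (i + 1))

/-!
Work in a finite noncyclic abelian group `G` of order greater than `4`, push the Cayley digraph of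
`{a, b}` at `0`, and let `σ` be the successor permutation of a hamiltonian cycle. Counting the arcs
that enter `a + ⟨a - b⟩` shows that `H = ⟨a - b⟩` has index `2`, so `σ` interchanges `H` and its
complement; noncyclicity makes `H` of even order and `a + a` an even multiple `k • (a - b)`.
Assume, by symmetry, that `σ a = 0`. If `σ 0 = -b`, the cycle closes up after four steps. If
`σ 0 = -a`, then `P x = σ x - a` and `Q x = σ⁻¹ x + b` permute `H` and move each `x ≠ 0` by `0` or
`-(a - b)`, which forces them to be rotations of a segment of the cyclic group `H`, of signs
`(-1) ^ k` and `(-1) ^ (k - 1)`. In the identity `Q (σ² x) = P x + (a + b)` on `H`, the cycle `σ²`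
of even length is odd, and the translation by `a + b = (k - 1) • (a - b)` has sign
`(-1) ^ (k - 1)`: the signs of the two sides disagree, since `k` is even.

When `gcd m n = 1`, the element `(1, -1)` generates `ZMod m × ZMod n`, so in a hamiltonian cycle of
the unpushed digraph all arcs have the same direction, and the cycle is too short.
-/

open Equiv AddSubgroup

section Permutations

/-- Two strictly monotone maps with the same range agree, so `i ↦ ψ i.succ` is `(ψ 0).succAbove`. -/
theorem eq_cycleRange_symm_of_forall_eq_succ_or_castSucc {n : ℕ} (ψ : Perm (Fin (n + 1)))
    (h : ∀ i : Fin n, ψ i.succ = i.succ ∨ ψ i.succ = i.castSucc) :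
    ψ = (ψ 0).cycleRange.symm := by
  have hinj : Function.Injective fun i : Fin n => ψ i.succ :=
    ψ.injective.comp (Fin.succ_injective n)
  have hmono : StrictMono fun i : Fin n => ψ i.succ := by
    refine Monotone.strictMono_of_injective (fun i j hij => ?_) hinj
    obtain rfl | hlt := hij.eq_or_lt
    · exact le_rfl
    rcases h i with hi | hi <;> rcases h j with hj | hj <;>
      simp only [hi, hj, Fin.le_def, Fin.lt_def, Fin.val_succ, Fin.val_castSucc] at hlt ⊢ <;> omega
  have hrange : Set.range (fun i : Fin n => ψ i.succ) = {ψ 0}ᶜ := by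
    rw [← Function.comp_def, Set.range_comp, Fin.range_succ, Set.image_compl_eq ψ.bijective,
      Set.image_singleton]
  have hsucc := (hmono.range_inj (Fin.strictMono_succAbove (ψ 0))).1
    (hrange.trans (Fin.range_succAbove _).symm)
  ext i : 1
  cases i using Fin.cases with
  | zero => rw [Fin.cycleRange_symm_zero]
  | succ i => rw [Fin.cycleRange_symm_succ]; exact congrFun hsucc i

theorem sign_of_isCycleOn_univ {α : Type*} [Fintype α] [DecidableEq α] [Nontrivial α]
    {σ : Perm α} (hσ : σ.IsCycleOn Set.univ) : Perm.sign σ = -(-1) ^ Fintype.card α := by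
  have hne (x : α) : σ x ≠ x := hσ.apply_ne Set.nontrivial_univ (Set.mem_univ x)
  have hcycle : σ.IsCycle :=
    Perm.isCycle_iff_exists_isCycleOn.2 ⟨_, Set.nontrivial_univ, hσ, fun x _ => Set.mem_univ x⟩
  have hsupport : σ.support = Finset.univ :=
    Finset.eq_univ_of_forall fun x => Perm.mem_support.2 (hne x)
  rw [hcycle.sign, hsupport, Finset.card_univ]

theorem isCycleOn_sq {α : Type*} {σ : Perm α} {s : Set α} (hσ : σ.IsCycleOn Set.univ)
    (hs : ∀ x, σ x ∈ s ↔ x ∉ s) : (σ ^ 2).IsCycleOn s := by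
  have hsq : Set.BijOn (⇑(σ ^ 2)) s s :=
    Equiv.bijOn _ fun x => by rw [sq, Perm.mul_apply, hs, hs, not_not]
  refine ⟨hsq, fun x hx y hy => ?_⟩
  obtain ⟨i, rfl⟩ := hσ.2 (Set.mem_univ x) (Set.mem_univ y)
  obtain ⟨j, rfl | rfl⟩ := i.even_or_odd'
  · exact ⟨j, by rw [← zpow_natCast σ 2, ← zpow_mul, Nat.cast_ofNat]⟩
  · have hmem := (hsq.perm_zpow j).mapsTo hx
    rw [← zpow_natCast σ 2, ← zpow_mul, Nat.cast_ofNat] at hmem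
    rw [add_comm, zpow_add, zpow_one, Perm.mul_apply, hs] at hy
    exact absurd hmem hy

theorem pow_apply_ne_of_isCycleOn_univ {α : Type*} [Finite α] {σ : Perm α}
    (hσ : σ.IsCycleOn Set.univ) {i : ℕ} (hi : 0 < i) (hlt : i < Nat.card α) (x : α) :
    (σ ^ i) x ≠ x := by
  have := Fintype.ofFinite α
  rw [← Finset.coe_univ] at hσ
  rw [Ne, hσ.pow_apply_eq (Finset.mem_univ x), Finset.card_univ, ← Nat.card_eq_fintype_card]
  exact Nat.not_dvd_of_pos_of_lt hi hlt

end Permutations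

section HamOn

variable {V W : Type} {E : V → V → Prop} {N : ℕ}

theorem HamOn.map {E' : W → W → Prop} (h : HamOn E Set.univ N) (e : V ≃ W)
    (he : ∀ u v, E u v → E' (e u) (e v)) : HamOn E' Set.univ N := by
  obtain ⟨f, hinj, hrange, hE⟩ := h
  refine ⟨e ∘ f, e.injective.comp hinj, ?_, fun i => he _ _ (hE i)⟩
  rw [Set.range_comp, hrange, Set.image_univ, e.range_eq_univ]

theorem HamOn.exists_isCycleOn (h : HamOn E Set.univ N) :
    ∃ σ : Perm V, σ.IsCycleOn Set.univ ∧ ∀ u, E u (σ u) := by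
  obtain ⟨f, hinj, hrange, hE⟩ := h
  let e : ZMod N ≃ V := Equiv.ofBijective f ⟨hinj, Set.range_eq_univ.1 hrange⟩
  refine ⟨e.permCongrHom (Equiv.addRight 1), ⟨(Equiv.bijective _).bijOn_univ, ?_⟩, ?_⟩
  · refine e.forall_congr_right.1 fun x _ => e.forall_congr_right.1 fun y _ => ?_
    obtain ⟨i, hi⟩ := ZMod.intCast_surjective (y - x)
    refine ⟨i, ?_⟩
    rw [← map_zpow, Equiv.zsmul_addRight]
    simp [hi]
  · refine e.forall_congr_right.1 fun x => ?_
    rw [permCongrHom_coe, permCongr_apply, symm_apply_apply]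
    exact hE x

end HamOn

section CyclicSubgroups

theorem eq_top_of_isCycleOn_of_neg_add_mem {G : Type*} [AddGroup G] {σ : Perm G} {K : AddSubgroup G}
    (hσ : σ.IsCycleOn Set.univ) (hK : ∀ u, -u + σ u ∈ K) : K = ⊤ := by
  have hbij : Set.BijOn σ K K :=
    Equiv.bijOn _ fun u => by simpa using K.add_mem_cancel_right (y := u) (hK u)
  refine (eq_top_iff' K).2 fun u => ?_
  obtain ⟨i, rfl⟩ := hσ.2 (Set.mem_univ 0) (Set.mem_univ u)
  exact (hbij.perm_zpow i).mapsTo K.zero_mem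

variable {G : Type*} [AddGroup G] {d : G}

theorem sign_eq_neg_one_zpow_of_forall_eq_or_eq_sub [Fintype (zmultiples d)]
    [DecidableEq (zmultiples d)] (hd : Even (addOrderOf d)) (ψ : Perm (zmultiples d))
    (hψ : ∀ x, x ≠ 0 → (ψ x : G) = x ∨ (ψ x : G) = x - d) {j : ℤ} (hj : (ψ 0 : G) = j • d) :
    Perm.sign ψ = (-1) ^ j := by
  have hfin : IsOfFinAddOrder d := finite_zmultiples.1 (Set.toFinite _)
  obtain ⟨n, hn⟩ := Nat.exists_eq_add_one.2 hfin.addOrderOf_pos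
  let e : Fin (n + 1) ≃ zmultiples d := (finCongr hn.symm).trans (finEquivZMultiples hfin)
  have he (i : Fin (n + 1)) : (e i : G) = (i : ℕ) • d := rfl
  have he_zero : e 0 = 0 := Subtype.ext (by simp [he])
  let φ : Perm (Fin (n + 1)) := e.symm.permCongr ψ
  have hφ (i : Fin (n + 1)) : e (φ i) = ψ (e i) := by simp [φ]
  have hstep (i : Fin n) : φ i.succ = i.succ ∨ φ i.succ = i.castSucc := by
    refine (hψ (e i.succ) (by simp [← he_zero])).imp (fun h => ?_) fun h => ?_ <;>
      refine e.injective (Subtype.ext ?_)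
    · rw [hφ, h]
    · rw [hφ, h, he, he, Fin.val_succ, succ_nsmul, add_sub_cancel_right, Fin.val_castSucc]
  have hparity : Even ((φ 0 : ℕ) - j) := by
    have h : ((φ 0 : ℕ) - j) • d = 0 := by
      rw [sub_zsmul, natCast_zsmul, ← he, hφ, he_zero, hj]; simp
    rw [even_iff_two_dvd]
    exact ((Int.even_coe_nat _).2 hd).two_dvd.trans (addOrderOf_dvd_iff_zsmul_eq_zero.2 h)
  calc Perm.sign ψ = Perm.sign φ := (Perm.sign_permCongr e.symm ψ).symm
    _ = (-1) ^ (φ 0 : ℕ) := by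
      rw [eq_cycleRange_symm_of_forall_eq_succ_or_castSucc φ hstep, Perm.sign_symm,
        Fin.sign_cycleRange, Fin.cycleRange_symm_zero]
    _ = (-1) ^ j := by
      rw [← zpow_natCast, ← sub_add_cancel ((φ 0 : ℕ) : ℤ) j, zpow_add, hparity.neg_one_zpow,
        one_mul]

theorem exists_perm_zmultiples_sign_eq
    [Fintype (zmultiples d)] [DecidableEq (zmultiples d)] (hd : Even (addOrderOf d)) (ρ : Perm G)
    (hρ : ∀ x ∈ zmultiples d, x ≠ 0 → ρ x = x ∨ ρ x = x - d) {j : ℤ} (hj : ρ 0 = j • d) :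
    ∃ ψ : Perm (zmultiples d), (∀ x, (ψ x : G) = ρ x) ∧ Perm.sign ψ = (-1) ^ j := by
  have hmaps (x : G) (hx : x ∈ zmultiples d) : ρ x ∈ zmultiples d := by
    obtain rfl | hne := eq_or_ne x 0
    · exact hj ▸ zsmul_mem_zmultiples d j
    · rcases hρ x hx hne with h | h <;> rw [h]
      exacts [hx, sub_mem hx (mem_zmultiples d)]
  refine ⟨ρ.subtypePermOfFintype hmaps, fun x => rfl, ?_⟩
  exact sign_eq_neg_one_zpow_of_forall_eq_or_eq_sub hd _
    (fun x hx => hρ x x.2 (by simpa using hx)) hj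

theorem sign_addRight_zmultiples [Fintype (zmultiples d)] [DecidableEq (zmultiples d)]
    (hd : Even (addOrderOf d)) {c : zmultiples d} {j : ℤ} (hc : (c : G) = j • d) :
    Perm.sign (Equiv.addRight c) = (-1) ^ j := by
  let d' : zmultiples d := ⟨d, mem_zmultiples d⟩
  have hsign : Perm.sign (Equiv.addRight (-d')) = (-1) ^ (-1 : ℤ) :=
    sign_eq_neg_one_zpow_of_forall_eq_or_eq_sub hd _
      (fun x _ => .inr (by simp [d', sub_eq_add_neg])) (by simp [d'])
  have hc' : c = (-j) • -d' := Subtype.ext (by simp [hc, d'])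
  rw [hc', ← Equiv.zsmul_addRight, map_zpow, hsign, ← zpow_mul, neg_one_mul, neg_neg]

theorem sign_sq_subtypePerm {σ : Perm G} [Fintype (zmultiples d)]
    [DecidableEq (zmultiples d)] (hcyc : σ.IsCycleOn Set.univ) (hd : Even (addOrderOf d))
    (hswap : ∀ u, σ u ∈ zmultiples d ↔ u ∉ zmultiples d)
    (h : ∀ u, (σ ^ 2) u ∈ zmultiples d ↔ u ∈ zmultiples d) :
    Perm.sign ((σ ^ 2).subtypePerm h) = -1 := by
  have hcard : Fintype.card (zmultiples d) = addOrderOf d := by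
    rw [← Nat.card_eq_fintype_card, Nat.card_zmultiples]
  have hcycle : ((σ ^ 2).subtypePerm h).IsCycleOn Set.univ := by
    simpa using (isCycleOn_sq hcyc hswap).subtypePerm
  have : Nontrivial (zmultiples d) := by
    have hpos : 0 < addOrderOf d := hcard ▸ Fintype.card_pos
    obtain ⟨r, hr⟩ := hd
    rw [← Fintype.one_lt_card_iff_nontrivial, hcard]
    omega
  rw [sign_of_isCycleOn_univ hcycle, hcard, hd.neg_one_pow]

end CyclicSubgroups

section GeneratedByPair

variable {G : Type*} [AddCommGroup G] {a b : G}

theorem isAddCyclic_of_closure_pair_eq_top {c : G} (hgen : closure {a, b} = ⊤)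
    (ha : a ∈ zmultiples c) (hb : b ∈ zmultiples c) : IsAddCyclic G := by
  refine isAddCyclic_iff_exists_zmultiples_eq_top.2 ⟨c, top_unique ?_⟩
  rw [← hgen, closure_le]
  exact Set.pair_subset ha hb

theorem index_zmultiples_sub_eq_two (hgen : closure {a, b} = ⊤) (ha : a ∉ zmultiples (a - b))
    (haa : a + a ∈ zmultiples (a - b)) : (zmultiples (a - b)).index = 2 := by
  have hba : b + a ∈ zmultiples (a - b) := by
    simpa [add_comm] using sub_mem haa (mem_zmultiples (a - b))
  refine index_eq_two_iff_exists_notMem_and.2 ⟨a, ha, fun g => ?_⟩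
  have hg : g ∈ closure {a, b} := hgen ▸ mem_top g
  induction hg using closure_induction with
  | mem g hg =>
    rcases hg with rfl | rfl
    exacts [.inl haa, .inl hba]
  | zero => exact .inr (zero_mem _)
  | add g g' _ _ hg hg' =>
    rcases hg with hg | hg <;> rcases hg' with hg' | hg'
    · exact .inr (by simpa [add_add_add_comm g a] using sub_mem (add_mem hg hg') haa)
    · exact .inl (add_right_comm g g' a ▸ add_mem hg hg')
    · exact .inl (add_assoc g g' a ▸ add_mem hg hg')
    · exact .inr (add_mem hg hg')
  | neg g _ hg =>
    exact hg.imp (fun hg => by simpa [neg_add_eq_sub] using sub_mem haa hg) neg_mem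

theorem even_of_zsmul_sub_eq_add_self (hG : ¬IsAddCyclic G) (hgen : closure {a, b} = ⊤) {k : ℤ}
    (hk : k • (a - b) = a + a) : Even k := by
  rw [← Int.not_odd_iff_even]
  rintro ⟨j, rfl⟩
  -- For `k = 2 * j + 1`, the element `c = a - j • (a - b)` satisfies `2 • c = a - b`.
  let c := a - j • (a - b)
  have hc : c + c = a - b := by
    simp only [c]
    rw [sub_add_sub_comm, ← hk]
    module
  have hd : a - b ∈ zmultiples c := hc ▸ add_mem (mem_zmultiples c) (mem_zmultiples c)
  have ha : a ∈ zmultiples c := by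
    simpa [c] using add_mem (mem_zmultiples c) (zsmul_mem hd j)
  exact hG (isAddCyclic_of_closure_pair_eq_top hgen ha (by simpa using sub_mem ha hd))

theorem even_addOrderOf_sub (hG : ¬IsAddCyclic G) (hgen : closure {a, b} = ⊤)
    (haa : a + a ∈ zmultiples (a - b)) : Even (addOrderOf (a - b)) := by
  obtain ⟨k, hk⟩ := mem_zmultiples_iff.1 haa
  have hk' : (k + addOrderOf (a - b)) • (a - b) = a + a := by
    rw [add_zsmul, hk, natCast_zsmul, addOrderOf_nsmul_eq_zero, add_zero]
  have heven := even_of_zsmul_sub_eq_add_self hG hgen hk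
  have heven' := even_of_zsmul_sub_eq_add_self hG hgen hk'
  exact (Int.even_coe_nat _).1 ((Int.even_add.1 heven').1 heven)

end GeneratedByPair

section CayleyDigraph

variable {G : Type*} [AddCommGroup G] {a b u v : G}

/-- Arc relation of the Cayley digraph of an abelian group `G` with connection set `{a, b}`.
For `G = ZMod m × ZMod n`, `a = (1, 0)`, `b = (0, 1)` it is `cpEdge m n`. -/
def cayleyEdge (a b u v : G) : Prop :=
  v = u + a ∨ v = u + b

/-- Arc relation of the digraph obtained from `E` by pushing at `v₀`, that is, by reversing every
arc incident with `v₀`. -/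
def pushAt {V : Type*} (E : V → V → Prop) (v₀ u v : V) : Prop :=
  (E u v ∧ u ≠ v₀ ∧ v ≠ v₀) ∨ (E v u ∧ (u = v₀ ∨ v = v₀))

theorem cayleyEdge_swap : cayleyEdge b a = cayleyEdge a b := by
  ext u v
  exact or_comm

theorem cayleyEdge_add_right_iff (c : G) : cayleyEdge a b (u + c) (v + c) ↔ cayleyEdge a b u v := by
  simp only [cayleyEdge, add_right_comm u c, add_left_inj]

theorem pushAt_iff_of_ne {V : Type*} {E : V → V → Prop} {v₀ u v : V} (hu : u ≠ v₀) (hv : v ≠ v₀) :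
    pushAt E v₀ u v ↔ E u v := by
  simp [pushAt, hu, hv]

theorem pushAt_cayleyEdge_zero_left : pushAt (cayleyEdge a b) 0 0 v ↔ v = -a ∨ v = -b := by
  simp [pushAt, cayleyEdge, eq_neg_iff_add_eq_zero, eq_comm]

theorem pushAt_cayleyEdge_zero_right : pushAt (cayleyEdge a b) 0 u 0 ↔ u = a ∨ u = b := by
  simp [pushAt, cayleyEdge]

theorem pushAt_cayleyEdge_cases (h : pushAt (cayleyEdge a b) 0 u v) :
    (u = 0 ∧ (v = -a ∨ v = -b)) ∨ (v = 0 ∧ (u = a ∨ u = b)) ∨ v = u + a ∨ v = u + b := by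
  obtain rfl | hu := eq_or_ne u 0
  · exact .inl ⟨rfl, pushAt_cayleyEdge_zero_left.1 h⟩
  obtain rfl | hv := eq_or_ne v 0
  · exact .inr (.inl ⟨rfl, pushAt_cayleyEdge_zero_right.1 h⟩)
  · exact .inr (.inr ((pushAt_iff_of_ne hu hv).1 h))

theorem neg_add_mem_closure_pair_of_pushAt (h : pushAt (cayleyEdge a b) 0 u v) :
    -u + v ∈ closure {a, b} := by
  have ha : a ∈ closure {a, b} := subset_closure (by simp)
  have hb : b ∈ closure {a, b} := subset_closure (by simp)
  rcases pushAt_cayleyEdge_cases h with ⟨rfl, rfl | rfl⟩ | ⟨rfl, rfl | rfl⟩ | rfl | rfl <;>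
    simpa

/-- `σ⁻¹` maps the coset `a + ⟨a - b⟩` injectively, hence onto, `⟨a - b⟩`; so the successor
`-a` or `-b` of `0` lies in `a + ⟨a - b⟩`. -/
theorem add_self_mem_zmultiples_sub [Finite G] {σ : Perm G}
    (hσ : ∀ u, pushAt (cayleyEdge a b) 0 u (σ u)) (ha : a ∉ zmultiples (a - b)) :
    a + a ∈ zmultiples (a - b) := by
  have hd : a - b ∈ zmultiples (a - b) := mem_zmultiples _
  have hmaps (h : zmultiples (a - b)) : σ.symm (a + h) ∈ zmultiples (a - b) := by
    obtain h0 | h0 := eq_or_ne (σ.symm (a + h)) 0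
    · exact h0 ▸ zero_mem _
    have hne : a + h ≠ 0 := fun hzero =>
      ha ((add_mem_cancel_right h.2).1 (hzero ▸ zero_mem _))
    have hedge := hσ (σ.symm (a + h))
    rw [σ.apply_symm_apply, pushAt_iff_of_ne h0 hne] at hedge
    rcases hedge with heq | heq
    · rw [eq_sub_of_add_eq heq.symm, add_sub_cancel_left]; exact h.2
    · rw [eq_sub_of_add_eq heq.symm, add_sub_right_comm]; exact add_mem hd h.2
  have hinj : Function.Injective fun h => (⟨_, hmaps h⟩ : zmultiples (a - b)) :=
    fun h h' heq => by simpa using heq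
  obtain ⟨h, hh⟩ := Finite.surjective_of_injective hinj 0
  have hsucc : σ 0 = a + h := by rw [← σ.eq_symm_apply]; exact (congrArg Subtype.val hh).symm
  rcases pushAt_cayleyEdge_zero_left.1 (hsucc ▸ hσ 0) with heq | heq
  · rw [show a + a = -h by rw [eq_neg_iff_add_eq_zero, add_assoc, heq, add_neg_cancel]]
    exact neg_mem h.2
  · rw [show a + a = (a - b) - h by rw [eq_sub_iff_add_eq, add_assoc, heq, sub_eq_add_neg]]
    exact sub_mem hd h.2

theorem mem_iff_notMem_of_pushAt {H : AddSubgroup G} (hH : H.index = 2) (ha : a ∉ H) (hb : b ∉ H)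
    (h : pushAt (cayleyEdge a b) 0 u v) : v ∈ H ↔ u ∉ H := by
  rcases pushAt_cayleyEdge_cases h with ⟨rfl, rfl | rfl⟩ | ⟨rfl, rfl | rfl⟩ | rfl | rfl <;>
    simp [add_mem_iff_of_index_two hH, ha, hb]

theorem exists_perm_apply_sub
    [Fintype (zmultiples (a - b))] [DecidableEq (zmultiples (a - b))] {σ : Perm G}
    (hσ : ∀ u, pushAt (cayleyEdge a b) 0 u (σ u)) (hpred : σ a = 0) (hsucc : σ 0 = -a)
    (ha : a ∉ zmultiples (a - b)) (hd : Even (addOrderOf (a - b))) {k : ℤ}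
    (hk : k • (a - b) = a + a) :
    ∃ P : Perm (zmultiples (a - b)), (∀ x, (P x : G) = σ x - a) ∧ Perm.sign P = (-1) ^ (-k) := by
  simp_rw [sub_eq_add_neg (σ _)]
  refine exists_perm_zmultiples_sign_eq hd (σ.trans (Equiv.addRight (-a))) (fun x hx hx0 => ?_)
    (by simp [hsucc, hk])
  have hσx : σ x ≠ 0 := fun h => ha (σ.injective (hpred.trans h.symm) ▸ hx)
  refine ((pushAt_iff_of_ne hx0 hσx).1 (hσ x)).imp (fun h => ?_) fun h => ?_
  · simp [h]
  · simp only [trans_apply, h, coe_addRight]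
    abel

theorem exists_perm_symm_apply_add
    [Fintype (zmultiples (a - b))] [DecidableEq (zmultiples (a - b))] {σ : Perm G}
    (hσ : ∀ u, pushAt (cayleyEdge a b) 0 u (σ u)) (hpred : σ a = 0) (hsucc : σ 0 = -a)
    (ha : a ∉ zmultiples (a - b)) (hd : Even (addOrderOf (a - b))) {k : ℤ}
    (hk : a + b = k • (a - b)) :
    ∃ Q : Perm (zmultiples (a - b)), (∀ x, (Q x : G) = σ.symm x + b) ∧ Perm.sign Q = (-1) ^ k := by
  refine exists_perm_zmultiples_sign_eq hd (σ.symm.trans (Equiv.addRight b)) (fun x hx hx0 => ?_)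
    (by simp [← hpred, hk])
  obtain ⟨u, rfl⟩ := σ.surjective x
  have hu : u ≠ 0 := by
    rintro rfl
    exact ha (neg_mem_iff.1 (hsucc ▸ hx))
  refine ((pushAt_iff_of_ne hu hx0).1 (hσ u)).symm.imp (fun h => ?_) fun h => ?_
  · rw [trans_apply, symm_apply_apply, coe_addRight, h]
  · rw [trans_apply, symm_apply_apply, coe_addRight, h, ← sub_add, add_sub_cancel_right]

theorem apply_zero_ne_neg_of_even [Finite G] {σ : Perm G} (hcyc : σ.IsCycleOn Set.univ)
    (hσ : ∀ u, pushAt (cayleyEdge a b) 0 u (σ u)) (hpred : σ a = 0)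
    (hindex : (zmultiples (a - b)).index = 2) (ha : a ∉ zmultiples (a - b))
    (hd : Even (addOrderOf (a - b))) {k : ℤ} (hk : k • (a - b) = a + a) (hk_even : Even k) :
    σ 0 ≠ -a := by
  classical
  intro hsucc
  have := Fintype.ofFinite (zmultiples (a - b))
  have hb : b ∉ zmultiples (a - b) := fun hb =>
    ha (by simpa using add_mem (mem_zmultiples (a - b)) hb)
  have hswap (u : G) : σ u ∈ zmultiples (a - b) ↔ u ∉ zmultiples (a - b) :=
    mem_iff_notMem_of_pushAt hindex ha hb (hσ u)
  have hab : a + b = (k - 1) • (a - b) := by rw [sub_zsmul, hk, one_zsmul]; abel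
  obtain ⟨P, hP, hP_sign⟩ := exists_perm_apply_sub hσ hpred hsucc ha hd hk
  obtain ⟨Q, hQ, hQ_sign⟩ := exists_perm_symm_apply_add hσ hpred hsucc ha hd hab
  let τ := (σ ^ 2).subtypePerm fun _ => (isCycleOn_sq hcyc hswap).apply_mem_iff
  have hτ_sign : Perm.sign τ = -1 := sign_sq_subtypePerm hcyc hd hswap _
  let c : zmultiples (a - b) := ⟨a + b, hab ▸ zsmul_mem_zmultiples _ _⟩
  have hc_sign : Perm.sign (Equiv.addRight c) = (-1) ^ (k - 1) := sign_addRight_zmultiples hd hab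
  have hfactor : Q * τ = Equiv.addRight c * P := by
    ext x
    simp only [τ, c, Perm.mul_apply, hQ, Perm.subtypePerm_apply, sq, symm_apply_apply,
      coe_addRight, coe_add, hP]
    abel
  have hsign := congrArg Perm.sign hfactor
  rw [map_mul, map_mul, hQ_sign, hτ_sign, hc_sign, hP_sign, hk_even.neg.neg_one_zpow] at hsign
  exact absurd (mul_left_cancel hsign) (by decide)

theorem apply_zero_ne_neg_of_four_lt_card [Finite G] (hcard : 4 < Nat.card G) {σ : Perm G}
    (hcyc : σ.IsCycleOn Set.univ) (hσ : ∀ u, pushAt (cayleyEdge a b) 0 u (σ u))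
    (hpred : σ a = 0) : σ 0 ≠ -b := by
  intro hsucc
  have hne {i : ℕ} (hi : 0 < i) (hi4 : i ≤ 4) (x : G) : (σ ^ i) x ≠ x :=
    pow_apply_ne_of_isCycleOn_univ hcyc hi (hi4.trans_lt hcard) x
  have ha : a ≠ 0 := fun ha => hne one_pos (by decide) a (by rw [pow_one, hpred, ha])
  have hb : -b ≠ 0 := by simpa [hsucc] using hne one_pos (by decide) 0
  have hσb : σ (-b) ≠ 0 := by simpa [sq, hsucc] using hne two_pos (by decide) 0
  have hstep : σ (-b) = a - b := by
    rcases (pushAt_iff_of_ne hb hσb).1 (hσ (-b)) with h | h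
    · rw [h, neg_add_eq_sub]
    · exact absurd (h.trans (neg_add_cancel b)) hσb
  have hstep' : σ (a - b) = a := by
    obtain ⟨u, hu⟩ := σ.surjective a
    have hu0 : u ≠ 0 := by
      rintro rfl
      exact hne two_pos (by decide) 0 (by rw [sq, Perm.mul_apply, hu, hpred])
    rcases (pushAt_iff_of_ne hu0 (hu ▸ ha)).1 (hσ u) with h | h
    · exact absurd (right_eq_add.1 (hu.symm.trans h)) hu0
    · rwa [← eq_sub_of_add_eq (h.symm.trans hu)]
  refine hne four_pos le_rfl 0 ?_
  change σ (σ (σ (σ 0))) = 0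
  rw [hsucc, hstep, hstep', hpred]

theorem not_isCycleOn_of_apply_eq_zero [Finite G] (hG : ¬IsAddCyclic G) (hcard : 4 < Nat.card G)
    {σ : Perm G} (hσ : ∀ u, pushAt (cayleyEdge a b) 0 u (σ u)) (hpred : σ a = 0) :
    ¬σ.IsCycleOn Set.univ := by
  intro hcyc
  have hgen : closure {a, b} = ⊤ :=
    eq_top_of_isCycleOn_of_neg_add_mem hcyc fun u => neg_add_mem_closure_pair_of_pushAt (hσ u)
  have ha : a ∉ zmultiples (a - b) := fun ha =>
    hG (isAddCyclic_of_closure_pair_eq_top hgen ha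
      (by simpa using sub_mem ha (mem_zmultiples (a - b))))
  have haa : a + a ∈ zmultiples (a - b) := add_self_mem_zmultiples_sub hσ ha
  have hindex := index_zmultiples_sub_eq_two hgen ha haa
  have hd := even_addOrderOf_sub hG hgen haa
  obtain ⟨k, hk⟩ := mem_zmultiples_iff.1 haa
  have hk_even := even_of_zsmul_sub_eq_add_self hG hgen hk
  rcases pushAt_cayleyEdge_zero_left.1 (hσ 0) with hsucc | hsucc
  · exact apply_zero_ne_neg_of_even hcyc hσ hpred hindex ha hd hk hk_even hsucc
  · exact apply_zero_ne_neg_of_four_lt_card hcard hcyc hσ hpred hsucc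

theorem zmultiples_eq_top_or_of_isCycleOn [Finite G] {σ : Perm G} (hcyc : σ.IsCycleOn Set.univ)
    (hσ : ∀ u, cayleyEdge a b u (σ u)) (hd : zmultiples (a - b) = ⊤) :
    zmultiples a = ⊤ ∨ zmultiples b = ⊤ := by
  by_cases hb : ∀ u, σ u = u + b
  · exact .inr (eq_top_of_isCycleOn_of_neg_add_mem hcyc fun u => by simp [hb])
  obtain ⟨v, hv⟩ := not_forall.1 hb
  have hmultiple (k : ℕ) : σ (v + k • (a - b)) = v + k • (a - b) + a := by
    induction k with
    | zero => simpa using (hσ v).resolve_right hv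
    | succ k ih =>
      rw [succ_nsmul, ← add_assoc]
      rcases hσ (v + k • (a - b) + (a - b)) with h | h
      · exact h
      · rw [add_assoc _ (a - b), sub_add_cancel, ← ih] at h
        rw [σ.injective h, ih]
  refine .inl (eq_top_of_isCycleOn_of_neg_add_mem hcyc fun u => ?_)
  have hu : -v + u ∈ zmultiples (a - b) := hd ▸ mem_top _
  obtain ⟨k, hk⟩ := mem_multiples_iff_mem_zmultiples.2 hu
  obtain rfl := eq_neg_add_iff_add_eq.1 hk
  simpa only [hmultiple, neg_add_cancel_left] using mem_zmultiples a

end CayleyDigraph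

theorem stmt_18_general {G : Type} [AddCommGroup G] [Finite G] (hG : ¬IsAddCyclic G)
    (hcard : 4 < Nat.card G) (a b v₀ : G) (N : ℕ) :
    ¬HamOn (pushAt (cayleyEdge a b) v₀) Set.univ N := by
  intro h
  have hshift : HamOn (pushAt (cayleyEdge a b) 0) Set.univ N :=
    h.map (Equiv.addRight (-v₀)) fun u v => by
      simp only [pushAt, coe_addRight, cayleyEdge_add_right_iff, ne_eq, add_neg_eq_zero, imp_self]
  obtain ⟨σ, hcyc, hσ⟩ := hshift.exists_isCycleOn
  obtain ⟨u, hu⟩ := σ.surjective 0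
  have hedge := hσ u
  rw [hu, pushAt_cayleyEdge_zero_right] at hedge
  rcases hedge with rfl | rfl
  · exact not_isCycleOn_of_apply_eq_zero hG hcard hσ hu hcyc
  · exact not_isCycleOn_of_apply_eq_zero hG hcard (by rwa [cayleyEdge_swap] at hσ) hu hcyc

section ZModProd

theorem zmultiples_one_neg_one_eq_top {m n : ℕ} [NeZero m] [NeZero n] (h : m.Coprime n) :
    zmultiples ((1, -1) : ZMod m × ZMod n) = ⊤ := by
  rw [← card_eq_iff_eq_top, Nat.card_zmultiples, Prod.addOrderOf]
  simp [ZMod.addOrderOf_one, h.lcm_eq_mul]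

theorem gcd_ne_one_of_hamOn_cpEdge {m n N : ℕ} (hm : 1 < m) (hn : 1 < n)
    (h : HamOn (cpEdge m n) Set.univ N) : Nat.gcd m n ≠ 1 := by
  intro hcop
  have : NeZero m := ⟨by omega⟩
  have : NeZero n := ⟨by omega⟩
  obtain ⟨σ, hcyc, hσ⟩ := h.exists_isCycleOn
  have hd : zmultiples ((1, 0) - (0, 1) : ZMod m × ZMod n) = ⊤ := by
    simpa using zmultiples_one_neg_one_eq_top hcop
  rcases zmultiples_eq_top_or_of_isCycleOn hcyc hσ hd with htop | htop
  · have horder : m = m * n := by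
      simpa [Prod.addOrderOf, ZMod.addOrderOf_one] using
        addOrderOf_eq_card_of_zmultiples_eq_top htop
    exact hn.ne' ((mul_eq_left₀ (NeZero.ne m)).1 horder.symm)
  · have horder : n = m * n := by
      simpa [Prod.addOrderOf, ZMod.addOrderOf_one] using
        addOrderOf_eq_card_of_zmultiples_eq_top htop
    exact hm.ne' ((mul_eq_right₀ (NeZero.ne n)).1 horder.symm)

theorem not_isAddCyclic_zmod_prod {m n : ℕ} (h : Nat.gcd m n ≠ 1) :
    ¬IsAddCyclic (ZMod m × ZMod n) := by
  rw [AddGroup.isAddCyclic_prod_iff]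
  simp [h]

end ZModProd

/-- For `m, n ≥ 3`: if `gcd(m,n) ≠ 1` then `P(C⃗_m □ C⃗_n)` is not hamiltonian;
in particular, if `C⃗_m □ C⃗_n` is hamiltonian then `P(C⃗_m □ C⃗_n)` is not. -/
theorem stmt_18 (m n : ℕ) (hm : 3 ≤ m) (hn : 3 ≤ n) :
    (Nat.gcd m n ≠ 1 → ¬ HamOn (pushedEdge m n (1, 1)) Set.univ (m * n)) ∧
    (HamOn (cpEdge m n) Set.univ (m * n) →
      ¬ HamOn (pushedEdge m n (1, 1)) Set.univ (m * n)) := by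
  have : NeZero m := ⟨by omega⟩
  have : NeZero n := ⟨by omega⟩
  have hcard : 4 < Nat.card (ZMod m × ZMod n) := by
    rw [Nat.card_prod, Nat.card_zmod, Nat.card_zmod]
    nlinarith
  have pushed_not_hamiltonian (hgcd : Nat.gcd m n ≠ 1) :
      ¬HamOn (pushedEdge m n (1, 1)) Set.univ (m * n) :=
    stmt_18_general (not_isAddCyclic_zmod_prod hgcd) hcard (1, 0) (0, 1) (1, 1) (m * n)
  exact ⟨pushed_not_hamiltonian, fun h =>
    pushed_not_hamiltonian (gcd_ne_one_of_hamOn_cpEdge (by omega) (by omega) h)⟩
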